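/- With T̂ₖ(x) := x − (1/3)(1 + ω)·ψ(x, ηᵏ)·ηᵏ for k ∈ ℤ/12, the composite T̂₁ ∘ T̂₂ ∘ ⋯ ∘ T̂₁₁ equals multiplication by ωη on A_𝒪, and the composite T̂₁₁ ∘ T̂₁₀ ∘ ⋯ ∘ T̂₁ equals multiplication by η⁻¹ = η¹¹ on A_𝒪. -/

import Mathlib

open Polynomial

noncomputable section

/-- The Eisenstein ring `𝒪 = ℤ[ω]`, where `ω = e^{2πi/6}` is a primitive sixth root of
unity (so `ω² - ω + 1 = 0`), presented as `ℤ[X]/(X² - X + 1)`. -/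
abbrev O : Type := AdjoinRoot (X ^ 2 - X + 1 : ℤ[X])

/-- `ω`, the distinguished primitive sixth root of unity in `𝒪`. -/
def ω : O := AdjoinRoot.root _

lemma ω_sq : ω ^ 2 - ω + 1 = 0 := by
  have h := AdjoinRoot.eval₂_root (X ^ 2 - X + 1 : ℤ[X])
  simpa [ω, eval₂_add, eval₂_sub, eval₂_pow, eval₂_X, eval₂_one] using h

/-- Complex conjugation on the Eisenstein ring: the ring involution with
`conj ω = 1 - ω = ω⁻¹`. -/
def conj : O →+* O :=
  AdjoinRoot.lift (algebraMap ℤ O) (1 - ω) (by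
    have h := ω_sq
    simp only [eval₂_add, eval₂_sub, eval₂_pow, eval₂_X, eval₂_one]
    ring_nf
    ring_nf at h
    linear_combination h)

/-- `θ := ω - ω⁻¹ = ω - conj ω = 2ω - 1`, a square root of `-3` in `𝒪`. -/
def θ : O := ω - conj ω

/-- `𝒪[η]/(η¹² − 1)`, modelled as coefficient vectors with respect to the 𝒪-basis
`1, η, η², …, η¹¹`. -/
abbrev B12 : Type := Fin 12 → O

/-- The monomial `ηᵃ` as an element of `𝒪[η]/(η¹² − 1)`. -/
def ηpow (a : Fin 12) : B12 := Pi.single a 1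

/-- Multiplication by `η` on `𝒪[η]/(η¹² − 1)`: the cyclic shift of coefficients. -/
def S (x : B12) : B12 := fun a => x (a - 1)

/-- The coefficient function `F` of the Hermitian form `ψ₀`: `F(0) = 3`,
`F(11) = −1 − ω`, `F(1) = −1 − ω⁻¹` (note `ω⁻¹ = ω⁵`), and `F(k) = 0` otherwise. -/
def F12 : Fin 12 → O := fun k =>
  if k = 0 then 3 else if k = 11 then -1 - ω else if k = 1 then -1 - ω ^ 5 else 0

/-- The Hermitian form `ψ₀` on `𝒪[η]/(η¹² − 1)`: 𝒪-linear in the first variable,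
conjugate-linear in the second, with `ψ₀(ηᵃ, ηᵇ) = F(a − b mod 12)`. -/
def psi0 (x y : B12) : O := ∑ a : Fin 12, ∑ b : Fin 12, x a * conj (y b) * F12 (a - b)

/-- `Σᵢ₌₀¹¹ ηⁱ`. -/
def σ₁ : B12 := fun _ => 1

/-- `Σᵢ₌₀¹¹ (ωη)ⁱ`. -/
def σ₂ : B12 := fun a => ω ^ (a : ℕ)

/-- The 𝒪-submodule of `𝒪[η]/(η¹² − 1)` underlying the ideal `(h)`, where
`h = (η¹² − 1)/((η − 1)(η − ω⁻¹))`.  Indeed `(h) = (Σηⁱ, Σ(ωη)ⁱ)` (both generators are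
multiples of `h`, and `h` is an 𝒪[η]-combination of them since `ω⁻¹ − 1` is a unit),
and as an 𝒪-module this ideal is spanned by `Σηⁱ` and `Σ(ωη)ⁱ` alone, because
`η·Σηⁱ = Σηⁱ` and `η·Σ(ωη)ⁱ = ω⁻¹·Σ(ωη)ⁱ`. -/
def N : Submodule O B12 := Submodule.span O {σ₁, σ₂}

/-- `A_𝒪 = 𝒪[η]/(h)`, a free 𝒪-module of rank 10. -/
abbrev A12 : Type := B12 ⧸ N

/-- The quotient map `𝒪[η]/(η¹² − 1) → A_𝒪`. -/
def mkA : B12 → A12 := Submodule.Quotient.mk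

/-- The image `s_i` in `A_𝒪` of `(ω²η)^i`, for `i = 1, …, 10` (indexed by `Fin 10`,
so `sB i` is `s_{i+1}`). -/
def sB (i : Fin 10) : A12 :=
  mkA (ω ^ (2 * ((i : ℕ) + 1)) • ηpow (Fin.castLE (by omega) i.succ))

/-- Multiplication by `η⁻¹ = η¹¹` on `𝒪[η]/(η¹² − 1)`: the inverse cyclic shift. -/
def Sinv (x : B12) : B12 := fun a => x (a + 1)

/-! On coefficient vectors, `T̂ₖ` only changes the `k`-th coordinate, replacing `xₖ` by
`ω xₖ₋₁ - ω xₖ + xₖ₊₁`. Each composite is therefore a sweep through the coordinates `1, …, 11`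
that never touches the coordinate `0`, and its result solves a first-order recurrence.
In the descending sweep the new coordinate `yₖ` satisfies
`yₖ - ω xₖ₋₁ = yₖ₊₁ - ω xₖ`, so `yₐ - ω xₐ₋₁` is constant and `y` is `ωη · x` up to a multiple
of `Σ ηⁱ`. In the ascending sweep `yₖ - xₖ₊₁ = ω (yₖ₋₁ - xₖ)`, so `yₐ - xₐ₊₁` is a multiple
of `ωᵃ` and `y` is `η⁻¹ · x` up to a multiple of `Σ (ωη)ⁱ`.
-/

section Sweep

variable {n : ℕ}

lemma foldl_eq_apply_last_of_step {α : Type*} {f : Fin n → α → α} {s : Fin (n + 1) → α}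
    (h : ∀ i : Fin n, f i (s i.castSucc) = s i.succ) :
    Fin.foldl n (fun a i => f i a) (s 0) = s (Fin.last n) := by
  induction n with
  | zero => rfl
  | succ n ih =>
    rw [Fin.foldl_succ_last, ← Fin.castSucc_zero,
      ih (f := fun i => f i.castSucc) (s := fun i => s i.castSucc) fun i => h i.castSucc]
    exact h (Fin.last n)

lemma foldr_eq_apply_zero_of_step {α : Type*} {f : Fin n → α → α} {s : Fin (n + 1) → α}
    (h : ∀ i : Fin n, f i (s i.succ) = s i.castSucc) :
    Fin.foldr n f (s (Fin.last n)) = s 0 := by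
  induction n with
  | zero => rfl
  | succ n ih =>
    rw [Fin.foldr_succ, ← Fin.succ_last,
      ih (f := fun i => f i.succ) (s := fun i => s i.succ) fun i => h i.succ]
    exact h 0

variable {β : Fin (n + 1) → Type*} {φ : ∀ i : Fin n, (∀ a, β a) → β i.succ}
  {x y : ∀ a, β a}

lemma foldr_update_eq (h_zero : y 0 = x 0)
    (h_succ : ∀ i : Fin n, φ i ((Finset.Ioi i.succ).piecewise y x) = y i.succ) :
    Fin.foldr n (fun i z => Function.update z i.succ (φ i z)) x = y := by
  let s (i : Fin (n + 1)) : ∀ a, β a := (Finset.Ioi i).piecewise y x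
  have h_step (i : Fin n) :
      Function.update (s i.succ) i.succ (φ i (s i.succ)) = s i.castSucc := by
    have h_insert : Finset.Ioi i.castSucc = insert i.succ (Finset.Ioi i.succ) := by
      ext a
      simp only [Finset.mem_Ioi, Fin.castSucc_lt_iff_succ_le, Finset.Ioi_insert, Finset.mem_Ici]
    simp only [s]
    rw [h_succ, h_insert, Finset.piecewise_insert]
  have h_last : s (Fin.last n) = x := by
    simp only [s]
    rw [← Fin.top_eq_last, Finset.Ioi_top, Finset.piecewise_empty]
  have h_first : s 0 = y := by
    ext a
    rcases Fin.eq_zero_or_eq_succ a with rfl | ⟨i, rfl⟩ <;> simp [s, h_zero]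
  rw [← h_first, ← h_last]
  exact foldr_eq_apply_zero_of_step h_step

lemma foldl_update_eq (h_zero : y 0 = x 0)
    (h_succ : ∀ i : Fin n, φ i ((Finset.Iic i.castSucc).piecewise y x) = y i.succ) :
    Fin.foldl n (fun z i => Function.update z i.succ (φ i z)) x = y := by
  let s (i : Fin (n + 1)) : ∀ a, β a := (Finset.Iic i).piecewise y x
  have h_step (i : Fin n) :
      Function.update (s i.castSucc) i.succ (φ i (s i.castSucc)) = s i.succ := by
    have h_insert : Finset.Iic i.succ = insert i.succ (Finset.Iic i.castSucc) := by
      ext a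
      rw [Finset.mem_insert, Finset.mem_Iic, Finset.mem_Iic, Fin.le_castSucc_iff,
        le_iff_eq_or_lt]
    simp only [s]
    rw [h_succ, h_insert, Finset.piecewise_insert]
  have h_first : s 0 = x := by
    ext a
    rcases Fin.eq_zero_or_eq_succ a with rfl | ⟨i, rfl⟩ <;> simp [s, h_zero]
  have h_last : s (Fin.last n) = y := by
    simp only [s]
    rw [← Fin.top_eq_last, Finset.Iic_top, Finset.piecewise_univ]
  rw [← h_first, ← h_last]
  exact foldl_eq_apply_last_of_step (f := fun i z => Function.update z i.succ (φ i z)) h_step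

end Sweep

section CyclicReflection

variable {n : ℕ} {R M : Type*} [Ring R] [AddCommGroup M] [Module R M]

/-- The pseudo-reflection in the `k`-th coordinate of vectors indexed by a cycle: it multiplies
the `k`-th coordinate by `-q` and adds `q` times its predecessor and once its successor.
For `q = ω` it is `T̂ₖ` on coefficient vectors. -/
def cyclicReflection (q : R) (k : Fin (n + 1)) (x : Fin (n + 1) → M) : Fin (n + 1) → M :=
  Function.update x k (q • x (k - 1) - q • x k + x (k + 1))

lemma add_one_eq_zero_or_lt_add_one (k : Fin (n + 1)) : k + 1 = 0 ∨ k < k + 1 := by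
  rcases (Fin.le_last k).eq_or_lt with rfl | hk
  · exact .inl (Fin.last_add_one n)
  · exact .inr (Fin.lt_add_one_iff.2 hk)

lemma succ_sub_one_eq_castSucc (i : Fin n) : i.succ - 1 = i.castSucc := by
  rw [← Fin.coeSucc_eq_succ, add_sub_cancel_right]

lemma foldr_cyclicReflection_eq {q : R} {x y : Fin (n + 1) → M} (h_zero : y 0 = x 0)
    (h_succ : ∀ i : Fin n, y i.succ = q • x i.castSucc - q • x i.succ + y (i.succ + 1)) :
    Fin.foldr n (fun i => cyclicReflection q i.succ) x = y := by
  refine foldr_update_eq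
    (φ := fun i z => q • z (i.succ - 1) - q • z i.succ + z (i.succ + 1)) h_zero fun i => ?_
  have h_next : (Finset.Ioi i.succ).piecewise y x (i.succ + 1) = y (i.succ + 1) := by
    rcases add_one_eq_zero_or_lt_add_one i.succ with h | h
    · rw [h, Finset.piecewise_eq_of_notMem _ _ _ (by simp), h_zero]
    · exact Finset.piecewise_eq_of_mem _ _ _ (Finset.mem_Ioi.2 h)
  rw [succ_sub_one_eq_castSucc, h_next,
    Finset.piecewise_eq_of_notMem _ _ _ (by simp [i.castSucc_lt_succ.le]),
    Finset.piecewise_eq_of_notMem _ _ _ (by simp), h_succ]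

lemma foldl_cyclicReflection_eq {q : R} {x y : Fin (n + 1) → M} (h_zero : y 0 = x 0)
    (h_succ : ∀ i : Fin n, y i.succ = q • y i.castSucc - q • x i.succ + x (i.succ + 1)) :
    Fin.foldl n (fun z i => cyclicReflection q i.succ z) x = y := by
  refine foldl_update_eq
    (φ := fun i z => q • z (i.succ - 1) - q • z i.succ + z (i.succ + 1)) h_zero fun i => ?_
  have h_next : (Finset.Iic i.castSucc).piecewise y x (i.succ + 1) = x (i.succ + 1) := by
    rcases add_one_eq_zero_or_lt_add_one i.succ with h | h
    · rw [h, Finset.piecewise_eq_of_mem _ _ _ (by simp), h_zero]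
    · refine Finset.piecewise_eq_of_notMem _ _ _ ?_
      simpa only [Finset.mem_Iic, not_le] using i.castSucc_lt_succ.trans h
  rw [succ_sub_one_eq_castSucc, h_next,
    Finset.piecewise_eq_of_mem _ _ _ (by simp),
    Finset.piecewise_eq_of_notMem _ _ _ (by simp), h_succ]

theorem foldr_cyclicReflection (q : R) (x : Fin (n + 1) → M) :
    Fin.foldr n (fun i => cyclicReflection q i.succ) x =
      fun a => q • x (a - 1) + (x 0 - q • x (-1)) := by
  refine foldr_cyclicReflection_eq (by simp) fun i => ?_
  rw [succ_sub_one_eq_castSucc, add_sub_cancel_right]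
  abel

theorem foldl_cyclicReflection (q : R) (x : Fin (n + 1) → M) :
    Fin.foldl n (fun z i => cyclicReflection q i.succ z) x =
      fun a => x (a + 1) + q ^ (a : ℕ) • (x 0 - x 1) := by
  refine foldl_cyclicReflection_eq (by simp) fun i => ?_
  rw [Fin.coeSucc_eq_succ, Fin.val_succ, Fin.val_castSucc, pow_succ', mul_smul, smul_add]
  abel

end CyclicReflection

lemma ω_pow_five : ω ^ 5 = 1 - ω := by
  linear_combination (ω ^ 3 + ω ^ 2 - 1) * ω_sq

lemma psi0_ηpow_eq_sum (x : B12) (k : Fin 12) :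
    psi0 x (ηpow k) = ∑ a, x a * F12 (a - k) := by
  simp [psi0, ηpow, Pi.single_apply, apply_ite conj]

lemma F12_eq_add_ite (j : Fin 12) :
    F12 j = (if j = 0 then 3 else 0) + (if j = -1 then -1 - ω else 0)
      + (if j = 1 then -2 + ω else 0) := by
  have h_eleven : (11 : Fin 12) = -1 := rfl
  have h_zero_ne_neg_one : (0 : Fin 12) ≠ -1 := by decide
  have h_zero_ne_one : (0 : Fin 12) ≠ 1 := by decide
  have h_neg_one_ne_one : (-1 : Fin 12) ≠ 1 := by decide
  rcases eq_or_ne j 0 with rfl | h₀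
  · simp [F12, h_zero_ne_neg_one, h_zero_ne_one]
  rcases eq_or_ne j (-1) with rfl | h₁
  · simp [F12, h_eleven, h₀, h_neg_one_ne_one]
  rcases eq_or_ne j 1 with rfl | h₂
  · simp only [F12, h_eleven, h₀, h₁, ω_pow_five, if_false, if_true]
    ring
  · simp [F12, h_eleven, h₀, h₁, h₂]

lemma psi0_ηpow (x : B12) (k : Fin 12) :
    psi0 x (ηpow k) = 3 * x k - (1 + ω) * x (k - 1) - (2 - ω) * x (k + 1) := by
  have h_pred (a : Fin 12) : a - k = -1 ↔ a = k - 1 := by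
    rw [sub_eq_iff_eq_add, neg_add_eq_sub]
  have h_succ (a : Fin 12) : a - k = 1 ↔ a = k + 1 := by
    rw [sub_eq_iff_eq_add, add_comm]
  simp only [psi0_ηpow_eq_sum, F12_eq_add_ite, sub_eq_zero, h_pred, h_succ, mul_add, mul_ite,
    mul_zero, Finset.sum_add_distrib, Finset.sum_ite_eq', Finset.mem_univ, if_true]
  ring

lemma one_add_ω_mul_psi0_ηpow (x : B12) (k : Fin 12) :
    (1 + ω) * psi0 x (ηpow k) = 3 * ((1 + ω) * x k - ω * x (k - 1) - x (k + 1)) := by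
  rw [psi0_ηpow]
  -- The divisibility by `3` comes from `(1 + ω)² = 3ω` and `(1 + ω)(2 - ω) = 3`.
  linear_combination (x (k + 1) - x (k - 1)) * ω_sq

lemma cyclicReflection_ω (k : Fin 12) (x : B12) :
    cyclicReflection ω k x = x - ((1 + ω) * x k - ω * x (k - 1) - x (k + 1)) • ηpow k := by
  ext a
  rcases eq_or_ne a k with rfl | h
  · simp only [cyclicReflection, Function.update_self, ηpow, Pi.sub_apply, Pi.smul_apply,
      Pi.single_eq_same, smul_eq_mul]
    ring
  · simp [cyclicReflection, ηpow, h]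

lemma mkA_cyclicReflection_ω (k : Fin 12) (x : B12) :
    mkA (cyclicReflection ω k x) =
      mkA x - ((1 + ω) * x k - ω * x (k - 1) - x (k + 1)) • mkA (ηpow k) := by
  rw [cyclicReflection_ω]
  rfl

lemma mkA_add_of_mem (x : B12) {z : B12} (hz : z ∈ N) : mkA (x + z) = mkA x :=
  (Submodule.Quotient.eq N).2 (by simpa using hz)

lemma smul_σ₁_mem_N (c : O) : c • σ₁ ∈ N :=
  N.smul_mem c (Submodule.subset_span (by simp))

lemma smul_σ₂_mem_N (c : O) : c • σ₂ ∈ N :=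
  N.smul_mem c (Submodule.subset_span (by simp))

theorem mkA_foldr_cyclicReflection (x : B12) :
    mkA (Fin.foldr 11 (fun i => cyclicReflection ω i.succ) x) = ω • mkA (S x) := by
  have h_sweep : Fin.foldr 11 (fun i => cyclicReflection ω i.succ) x =
      ω • S x + (x 0 - ω * x (-1)) • σ₁ := by
    rw [foldr_cyclicReflection]
    ext a
    simp [S, σ₁]
  rw [h_sweep]
  exact mkA_add_of_mem _ (smul_σ₁_mem_N _)

theorem mkA_foldl_cyclicReflection (x : B12) :
    mkA (Fin.foldl 11 (fun z i => cyclicReflection ω i.succ z) x) = mkA (Sinv x) := by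
  have h_sweep : Fin.foldl 11 (fun z i => cyclicReflection ω i.succ z) x =
      Sinv x + (x 0 - x 1) • σ₂ := by
    rw [foldl_cyclicReflection]
    ext a
    simp [Sinv, σ₂, mul_comm]
  rw [h_sweep]
  exact mkA_add_of_mem _ (smul_σ₂_mem_N _)

/-- With `T̂ₖ(x) := x − (1/3)(1 + ω)·ψ(x, ηᵏ)·ηᵏ`, the composite
`T̂₁ ∘ T̂₂ ∘ ⋯ ∘ T̂₁₁` equals multiplication by `ωη` on `A_𝒪`, and the composite
`T̂₁₁ ∘ T̂₁₀ ∘ ⋯ ∘ T̂₁` equals multiplication by `η⁻¹ = η¹¹` on `A_𝒪`.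
(`T̂ₖ` is characterized denominator-freely by: `T̂ₖ x = x − c • ηᵏ` whenever
`(1 + ω)·ψ(x, ηᵏ) = 3c`; multiplication by `η` on `A_𝒪` is induced by the shift `S`.) -/
theorem statement16
    (ψA : A12 → A12 → O) (hψA : ∀ x y : B12, ψA (mkA x) (mkA y) = psi0 x y)
    (T : Fin 12 → A12 → A12)
    (hT : ∀ (k : Fin 12) (x : A12) (c : O),
      (1 + ω) * ψA x (mkA (ηpow k)) = 3 * c → T k x = x - c • mkA (ηpow k)) :
    (∀ x : B12,
      T 1 (T 2 (T 3 (T 4 (T 5 (T 6 (T 7 (T 8 (T 9 (T 10 (T 11 (mkA x))))))))))) =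
        ω • mkA (S x)) ∧
    (∀ x : B12,
      T 11 (T 10 (T 9 (T 8 (T 7 (T 6 (T 5 (T 4 (T 3 (T 2 (T 1 (mkA x))))))))))) =
        mkA (Sinv x)) := by
  have h_step (k : Fin 12) (x : B12) : T k (mkA x) = mkA (cyclicReflection ω k x) := by
    rw [mkA_cyclicReflection_ω]
    exact hT k (mkA x) _ (by rw [hψA, one_add_ω_mul_psi0_ηpow])
  constructor <;> intro x <;> simp only [h_step]
  · exact mkA_foldr_cyclicReflection x
  · exact mkA_foldl_cyclicReflection x

end
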